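/- Let 0 < p_0 < p_1 < ∞, let (Ω, μ) be a measure space, let {F_j}_{j∈ℤ} be a sequence of measurable functions on Ω (only finitely many nonzero), let {s_j} be nonnegative numbers and M > 0, and assume that for all j the inequality ‖F_j‖_{L^{p_ν}}^{p_ν} ≤ 2^{j p_ν} M^{p_ν} s_j holds for ν = 0 and ν = 1. Then for every p ∈ (p_0, p_1) there is a constant C = C(p_0, p_1, p) such that ‖∑_j F_j‖_{L^p}^p ≤ C^p M^p ∑_j 2^{jp} s_j. Moreover, the analogous statement holds with p_0 = 0, where the hypothesis for ν = 0 is replaced by μ({x : F_j(x) ≠ 0}) ≤ s_j, and then the conclusion holds for all 0 < p < p_1. -/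

import Mathlib

open MeasureTheory Set
open scoped ENNReal NNReal

noncomputable section

/-!
Write `x j = 2 ^ j * M` for the natural size of `F j`. If
`N = ∑ j, x j ^ p * ((a j / x j) ^ q + (a j / x j) ^ p₁)` with `q < p < p₁`, then bounding single
terms of `N` gives `a j ≤ N ^ (1 / p) * min (u ^ α) (u ^ (-β))` with `u = x j / N ^ (1 / p)` and
positive `α`, `β`. As `u` runs through a dyadic progression these bounds sum to a constant times
`N ^ (1 / p)`, independently of `N`; integrating the resulting pointwise inequality for
`a j = ‖F j x‖` gives the theorem. Since `b ^ q ≤ 1_{b ≠ 0} b ^ p₀ + b ^ p₁` whenever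
`p₀ ≤ q ≤ p₁`, the lower exponent `q` can be chosen positive, which includes `p₀ = 0`.
-/

universe u v

section DyadicSum

variable {α β : ℝ} {M : ℝ≥0∞}

lemma two_zpow_mul_ne_zero (j : ℤ) (hM₀ : M ≠ 0) : 2 ^ j * M ≠ 0 :=
  mul_ne_zero (ENNReal.zpow_pos two_ne_zero ENNReal.ofNat_ne_top j).ne' hM₀

lemma two_zpow_mul_ne_top (j : ℤ) (hM : M ≠ ∞) : 2 ^ j * M ≠ ∞ :=
  ENNReal.mul_ne_top (ENNReal.zpow_ne_top two_ne_zero ENNReal.ofNat_ne_top j) hM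

/-- Bound for the sums of `u ↦ min (u ^ α) (u ^ (-β))` over dyadic progressions: the two geometric
series that dominate the parts `u ≤ 1` and `u ≥ 1`. -/
def dyadicBumpBound (α β : ℝ) : ℝ≥0∞ := (1 - 2 ^ (-β))⁻¹ + (1 - 2 ^ (-α))⁻¹

lemma dyadicBumpBound_ne_zero : dyadicBumpBound α β ≠ 0 := by
  have h (c : ℝ) : (1 - (2 : ℝ≥0∞) ^ c)⁻¹ ≠ 0 :=
    ENNReal.inv_ne_zero.2 (ENNReal.sub_ne_top ENNReal.one_ne_top)
  simp [dyadicBumpBound, h]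

lemma dyadicBumpBound_ne_top (hα : 0 < α) (hβ : 0 < β) : dyadicBumpBound α β ≠ ∞ := by
  have h {c : ℝ} (hc : 0 < c) : (1 - (2 : ℝ≥0∞) ^ (-c))⁻¹ ≠ ∞ :=
    ENNReal.inv_ne_top.2 (tsub_pos_of_lt
      (ENNReal.rpow_lt_one_of_one_lt_of_neg ENNReal.one_lt_two (neg_neg_of_pos hc))).ne'
  exact ENNReal.add_ne_top.2 ⟨h hβ, h hα⟩

lemma tsum_min_two_zpow_rpow_le :
    ∑' i : ℤ, min (((2 : ℝ≥0∞) ^ (i + 1)) ^ α) ((2 ^ i) ^ (-β)) ≤ dyadicBumpBound α β := by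
  rw [tsum_of_nat_of_neg_add_one ENNReal.summable ENNReal.summable, dyadicBumpBound,
    ← ENNReal.tsum_geometric, ← ENNReal.tsum_geometric]
  gcongr with n n
  · refine (min_le_right _ _).trans_eq ?_
    rw [← ENNReal.rpow_natCast, ← ENNReal.rpow_mul, ← ENNReal.rpow_intCast_mul]
    push_cast
    ring_nf
  · refine (min_le_left _ _).trans_eq ?_
    rw [← ENNReal.rpow_natCast, ← ENNReal.rpow_mul, ← ENNReal.rpow_intCast_mul]
    push_cast
    ring_nf

lemma tsum_min_two_zpow_mul_rpow_le (hα : 0 < α) (hβ : 0 < β) (t : ℝ≥0∞) :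
    ∑' j : ℤ, min ((2 ^ j * t) ^ α) ((2 ^ j * t) ^ (-β)) ≤ dyadicBumpBound α β := by
  rcases eq_or_ne t 0 with rfl | ht₀
  · simp [hα]
  rcases eq_or_ne t ∞ with rfl | ht
  · have two_zpow_ne_zero (j : ℤ) : (2 : ℝ≥0∞) ^ j ≠ 0 := by
      simpa using two_zpow_mul_ne_zero j one_ne_zero
    simp [ENNReal.mul_top, two_zpow_ne_zero, hβ]
  obtain ⟨n, hnt, htn⟩ :=
    ENNReal.exists_mem_Ico_zpow ht₀ ht ENNReal.one_lt_two ENNReal.ofNat_ne_top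
  have zpow_add (i j : ℤ) : (2 : ℝ≥0∞) ^ (i + j) = 2 ^ i * 2 ^ j :=
    ENNReal.zpow_add two_ne_zero ENNReal.ofNat_ne_top i j
  calc ∑' j : ℤ, min ((2 ^ j * t) ^ α) ((2 ^ j * t) ^ (-β))
      ≤ ∑' j : ℤ, min (((2 : ℝ≥0∞) ^ (j + n + 1)) ^ α) ((2 ^ (j + n)) ^ (-β)) := by
        simp_rw [ENNReal.rpow_neg, add_assoc, zpow_add]
        gcongr
        rw [← zpow_add]
        exact htn.le
    _ = ∑' i : ℤ, min (((2 : ℝ≥0∞) ^ (i + 1)) ^ α) ((2 ^ i) ^ (-β)) :=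
        (Equiv.addRight n).tsum_eq fun i : ℤ ↦
          min (((2 : ℝ≥0∞) ^ (i + 1)) ^ α) ((2 ^ i) ^ (-β))
    _ ≤ dyadicBumpBound α β := tsum_min_two_zpow_rpow_le

end DyadicSum

section Pointwise

variable {p q p₀ p₁ : ℝ}

lemma le_mul_div_rpow_of_rpow_mul_div_rpow_le {a t x : ℝ≥0∞} (hp : 0 < p) (hq : 0 < q)
    (hx₀ : x ≠ 0) (hx : x ≠ ∞) (ht : t ≠ ∞) (h : x ^ p * (a / x) ^ q ≤ t ^ p) :
    a ≤ t * (x / t) ^ (1 - p / q) := by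
  have hxp₀ : x ^ p ≠ 0 := (ENNReal.rpow_pos (pos_iff_ne_zero.2 hx₀) hx).ne'
  have hxp : x ^ p ≠ ∞ := ENNReal.rpow_ne_top_of_nonneg hp.le hx
  rcases eq_or_ne t 0 with rfl | ht₀
  · have : (a / x) ^ q = 0 := by simpa [hp, hxp₀] using h
    simp_all [ENNReal.rpow_eq_zero_iff_of_pos hq, ENNReal.div_eq_zero_iff]
  have hxt₀ : x / t ≠ 0 := ENNReal.div_ne_zero.2 ⟨hx₀, ht⟩
  have hxt : x / t ≠ ∞ := ENNReal.div_ne_top hx ht₀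
  have hax : (a / x) ^ q ≤ ((t / x) ^ (p / q)) ^ q := by
    rw [← ENNReal.rpow_mul, div_mul_cancel₀ _ hq.ne', ENNReal.div_rpow_of_nonneg _ _ hp.le,
      ENNReal.le_div_iff_mul_le (.inl hxp₀) (.inl hxp), mul_comm]
    exact h
  calc a ≤ (t / x) ^ (p / q) * x :=
        (ENNReal.div_le_iff hx₀ hx).1 ((ENNReal.rpow_le_rpow_iff hq).1 hax)
    _ = (x / t) ^ (-(p / q)) * (t * (x / t)) := by
        rw [ENNReal.mul_div_cancel ht₀ ht, ENNReal.rpow_neg, ← ENNReal.inv_rpow,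
          ENNReal.inv_div (.inl ht) (.inl ht₀)]
    _ = t * (x / t) ^ (1 - p / q) := by
        rw [sub_eq_add_neg, ENNReal.rpow_add _ _ hxt₀ hxt, ENNReal.rpow_one]
        ring

lemma tsum_le_mul_dyadicBumpBound {a : ℤ → ℝ≥0∞} {M t : ℝ≥0∞} (hq : 0 < q) (hqp : q < p)
    (hp₁ : p < p₁) (hM₀ : M ≠ 0) (hM : M ≠ ∞) (ht : t ≠ ∞)
    (hq_le : ∀ j, (2 ^ j * M) ^ p * (a j / (2 ^ j * M)) ^ q ≤ t ^ p)
    (hp₁_le : ∀ j, (2 ^ j * M) ^ p * (a j / (2 ^ j * M)) ^ p₁ ≤ t ^ p) :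
    ∑' j, a j ≤ t * dyadicBumpBound (1 - p / p₁) (p / q - 1) := by
  have hp : 0 < p := hq.trans hqp
  have hx₀ (j : ℤ) : 2 ^ j * M ≠ 0 := two_zpow_mul_ne_zero j hM₀
  have hx (j : ℤ) : 2 ^ j * M ≠ ∞ := two_zpow_mul_ne_top j hM
  calc ∑' j, a j
      ≤ ∑' j : ℤ, t *
          min ((2 ^ j * (M / t)) ^ (1 - p / p₁)) ((2 ^ j * (M / t)) ^ (-(p / q - 1))) := by
        refine ENNReal.tsum_le_tsum fun j ↦ ?_
        rw [mul_min, neg_sub, ← mul_div_assoc]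
        exact le_min
          (le_mul_div_rpow_of_rpow_mul_div_rpow_le hp (hp.trans hp₁) (hx₀ j) (hx j) ht (hp₁_le j))
          (le_mul_div_rpow_of_rpow_mul_div_rpow_le hp hq (hx₀ j) (hx j) ht (hq_le j))
    _ ≤ t * dyadicBumpBound (1 - p / p₁) (p / q - 1) := by
        rw [ENNReal.tsum_mul_left]
        gcongr
        exact tsum_min_two_zpow_mul_rpow_le (sub_pos.2 ((div_lt_one (hp.trans hp₁)).2 hp₁))
          (sub_pos.2 ((one_lt_div hq).2 hqp)) _

/-- The power `a ^ r`, with value `0` at `a = 0` for every `r`. For `r = 0` it is the indicator of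
`a ≠ 0` (whereas `0 ^ 0 = 1`), so that its integral is the measure of a support. -/
def supportRPow (r : ℝ) (a : ℝ≥0∞) : ℝ≥0∞ := if a = 0 then 0 else a ^ r

lemma supportRPow_of_pos {r : ℝ} (hr : 0 < r) (a : ℝ≥0∞) : supportRPow r a = a ^ r := by
  by_cases ha : a = 0 <;> simp [supportRPow, ha, hr]

lemma measurable_supportRPow (r : ℝ) : Measurable (supportRPow r) :=
  Measurable.ite (measurableSet_singleton 0) measurable_const (measurable_id.pow_const r)

lemma supportRPow_div (r : ℝ) (a : ℝ≥0∞) {x : ℝ≥0∞} (hx : x ≠ ∞) :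
    supportRPow r (a / x) = (x ^ r)⁻¹ * supportRPow r a := by
  by_cases ha : a = 0
  · simp [supportRPow, ha]
  · simp [supportRPow, ha, hx, div_eq_mul_inv, ENNReal.inv_rpow, mul_comm,
      ENNReal.mul_rpow_of_ne_zero ha (ENNReal.inv_ne_zero.2 hx)]

lemma rpow_le_supportRPow_add (hq : 0 < q) (hp₀ : p₀ ≤ q) (hp₁ : q ≤ p₁) (b : ℝ≥0∞) :
    b ^ q ≤ supportRPow p₀ b + supportRPow p₁ b := by
  by_cases hb : b = 0
  · simp [hb, hq]
  simp only [supportRPow, hb, if_false]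
  rcases le_total b 1 with hb₁ | hb₁
  · exact (ENNReal.rpow_le_rpow_of_exponent_ge hb₁ hp₀).trans le_self_add
  · exact (ENNReal.rpow_le_rpow_of_exponent_le hb₁ hp₁).trans le_add_self

/-- A constant for the pointwise inequality `tsum_rpow_le_dyadicConst`; here `max p₀ (p / 2)` is a
positive exponent in `[p₀, p)`. -/
def dyadicConst (p₀ p₁ p : ℝ) : ℝ≥0∞ := dyadicBumpBound (1 - p / p₁) (p / max p₀ (p / 2) - 1)

lemma dyadicConst_ne_zero : dyadicConst p₀ p₁ p ≠ 0 := dyadicBumpBound_ne_zero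

lemma dyadicConst_ne_top (hp : 0 < p) (hp₀ : p₀ < p) (hp₁ : p < p₁) : dyadicConst p₀ p₁ p ≠ ∞ :=
  dyadicBumpBound_ne_top (sub_pos.2 ((div_lt_one (hp.trans hp₁)).2 hp₁))
    (sub_pos.2 ((one_lt_div (lt_max_of_lt_right (half_pos hp))).2 (max_lt hp₀ (half_lt_self hp))))

theorem tsum_rpow_le_dyadicConst (a : ℤ → ℝ≥0∞) {M : ℝ≥0∞} (hp : 0 < p) (hp₀ : p₀ < p)
    (hp₁ : p < p₁) (hM₀ : M ≠ 0) (hM : M ≠ ∞) :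
    (∑' j, a j) ^ p ≤ dyadicConst p₀ p₁ p ^ p * ∑' j : ℤ, (2 ^ j * M) ^ p *
      (supportRPow p₀ (a j / (2 ^ j * M)) + supportRPow p₁ (a j / (2 ^ j * M))) := by
  set N : ℝ≥0∞ := ∑' j : ℤ, (2 ^ j * M) ^ p *
    (supportRPow p₀ (a j / (2 ^ j * M)) + supportRPow p₁ (a j / (2 ^ j * M)))
  rcases eq_or_ne N ∞ with hN_top | hN_top
  · simp [hN_top, ENNReal.mul_top, hp.not_gt, dyadicConst_ne_zero]
  have hNp : (N ^ p⁻¹) ^ p = N := ENNReal.rpow_inv_rpow hp.ne' N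
  have term_le {r : ℝ} (hr : 0 < r) (hr₀ : p₀ ≤ r) (hr₁ : r ≤ p₁) (j : ℤ) :
      (2 ^ j * M) ^ p * (a j / (2 ^ j * M)) ^ r ≤ (N ^ p⁻¹) ^ p := by
    rw [hNp]
    exact (mul_le_mul_right (rpow_le_supportRPow_add hr hr₀ hr₁ _) _).trans (ENNReal.le_tsum j)
  have hq : 0 < max p₀ (p / 2) := lt_max_of_lt_right (half_pos hp)
  have hqp : max p₀ (p / 2) < p := max_lt hp₀ (half_lt_self hp)
  have sum_le : ∑' j, a j ≤ N ^ p⁻¹ * dyadicConst p₀ p₁ p :=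
    tsum_le_mul_dyadicBumpBound hq hqp hp₁ hM₀ hM
      (ENNReal.rpow_ne_top_of_nonneg (inv_nonneg.2 hp.le) hN_top)
      (term_le hq (le_max_left _ _) (hqp.trans hp₁).le)
      (term_le (hp.trans hp₁) (hp₀.trans hp₁).le le_rfl)
  calc (∑' j, a j) ^ p ≤ (N ^ p⁻¹ * dyadicConst p₀ p₁ p) ^ p := ENNReal.rpow_le_rpow sum_le hp.le
    _ = dyadicConst p₀ p₁ p ^ p * N := by
        rw [ENNReal.mul_rpow_of_nonneg _ _ hp.le, hNp, mul_comm]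

end Pointwise

section Integral

variable {Ω : Type u} [MeasurableSpace Ω] {μ : Measure Ω} {p p₀ p₁ : ℝ}

lemma lintegral_supportRPow_div_le {f : Ω → ℝ≥0∞} {r : ℝ} {x s : ℝ≥0∞} (hx₀ : x ≠ 0) (hx : x ≠ ∞)
    (h : ∫⁻ ω, supportRPow r (f ω) ∂μ ≤ x ^ r * s) :
    ∫⁻ ω, supportRPow r (f ω / x) ∂μ ≤ s := by
  have hxr₀ : x ^ r ≠ 0 := (ENNReal.rpow_pos (pos_iff_ne_zero.2 hx₀) hx).ne'
  have hxr : x ^ r ≠ ∞ := ENNReal.rpow_ne_top_of_ne_zero hx₀ hx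
  simp only [supportRPow_div r _ hx]
  rw [lintegral_const_mul' _ _ (ENNReal.inv_ne_top.2 hxr₀)]
  exact (ENNReal.inv_mul_le_iff hxr₀ hxr).2 h

theorem lintegral_tsum_rpow_le {f : ℤ → Ω → ℝ≥0∞} {s₀ s₁ : ℤ → ℝ≥0∞} {M : ℝ≥0∞} (hp : 0 < p)
    (hp₀ : p₀ < p) (hp₁ : p < p₁) (hM₀ : M ≠ 0) (hM : M ≠ ∞) (hf : ∀ j, AEMeasurable (f j) μ)
    (hf₀ : ∀ j, ∫⁻ ω, supportRPow p₀ (f j ω) ∂μ ≤ (2 ^ j * M) ^ p₀ * s₀ j)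
    (hf₁ : ∀ j, ∫⁻ ω, supportRPow p₁ (f j ω) ∂μ ≤ (2 ^ j * M) ^ p₁ * s₁ j) :
    ∫⁻ ω, (∑' j, f j ω) ^ p ∂μ ≤
      dyadicConst p₀ p₁ p ^ p * ∑' j : ℤ, (2 ^ j * M) ^ p * (s₀ j + s₁ j) := by
  have hx₀ (j : ℤ) : 2 ^ j * M ≠ 0 := two_zpow_mul_ne_zero j hM₀
  have hx (j : ℤ) : 2 ^ j * M ≠ ∞ := two_zpow_mul_ne_top j hM
  have meas (r : ℝ) (j : ℤ) : AEMeasurable (fun ω ↦ supportRPow r (f j ω / (2 ^ j * M))) μ :=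
    (measurable_supportRPow r).comp_aemeasurable ((hf j).div_const _)
  calc ∫⁻ ω, (∑' j, f j ω) ^ p ∂μ
      ≤ ∫⁻ ω, dyadicConst p₀ p₁ p ^ p * ∑' j : ℤ, (2 ^ j * M) ^ p *
          (supportRPow p₀ (f j ω / (2 ^ j * M)) + supportRPow p₁ (f j ω / (2 ^ j * M))) ∂μ :=
        lintegral_mono fun ω ↦ tsum_rpow_le_dyadicConst (f · ω) hp hp₀ hp₁ hM₀ hM
    _ = dyadicConst p₀ p₁ p ^ p * ∑' j : ℤ, (2 ^ j * M) ^ p *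
          (∫⁻ ω, supportRPow p₀ (f j ω / (2 ^ j * M)) ∂μ +
            ∫⁻ ω, supportRPow p₁ (f j ω / (2 ^ j * M)) ∂μ) := by
        rw [lintegral_const_mul' _ _
          (ENNReal.rpow_ne_top_of_nonneg hp.le (dyadicConst_ne_top hp hp₀ hp₁)),
          lintegral_tsum fun j ↦ ((meas p₀ j).fun_add (meas p₁ j)).const_mul _]
        congr with j
        rw [lintegral_const_mul' _ _ (ENNReal.rpow_ne_top_of_nonneg hp.le (hx j)),
          lintegral_add_left' (meas p₀ j)]
    _ ≤ dyadicConst p₀ p₁ p ^ p * ∑' j : ℤ, (2 ^ j * M) ^ p * (s₀ j + s₁ j) := by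
        gcongr with j
        · exact lintegral_supportRPow_div_le (hx₀ j) (hx j) (hf₀ j)
        · exact lintegral_supportRPow_div_le (hx₀ j) (hx j) (hf₁ j)

variable {E : Type v}

lemma eLpNorm_ofReal_rpow_eq_lintegral [ENorm E] (f : Ω → E) {q : ℝ} (hq : 0 < q) :
    eLpNorm f (ENNReal.ofReal q) μ ^ q = ∫⁻ ω, ‖f ω‖ₑ ^ q ∂μ := by
  simpa [Real.coe_toNNReal _ hq.le] using!
    eLpNorm_nnreal_pow_eq_lintegral (μ := μ) (f := f) (Real.toNNReal_pos.2 hq).ne'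

lemma lintegral_supportRPow_enorm_of_pos [ENorm E] (f : Ω → E) {q : ℝ} (hq : 0 < q) :
    ∫⁻ ω, supportRPow q ‖f ω‖ₑ ∂μ = eLpNorm f (ENNReal.ofReal q) μ ^ q := by
  simp_rw [eLpNorm_ofReal_rpow_eq_lintegral f hq, supportRPow_of_pos hq]

lemma lintegral_supportRPow_zero_enorm [TopologicalSpace E] [ENormedAddMonoid E]
    {f : Ω → E} (hf : MeasurableSet {ω | f ω ≠ 0}) :
    ∫⁻ ω, supportRPow 0 ‖f ω‖ₑ ∂μ = μ {ω | f ω ≠ 0} := by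
  rw [← lintegral_indicator_one hf]
  congr with ω
  by_cases h : f ω = 0 <;> simp [supportRPow, h]

lemma eLpNorm_finsum_le_eLpNorm_tsum_enorm [TopologicalSpace E] [ESeminormedAddCommMonoid E]
    {ι : Type*} {F : ι → Ω → E} (hF : (Function.support F).Finite) (q : ℝ≥0∞) :
    eLpNorm (fun ω ↦ ∑ᶠ j, F j ω) q μ ≤ eLpNorm (fun ω ↦ ∑' j, ‖F j ω‖ₑ) q μ := by
  refine eLpNorm_mono_enorm fun ω ↦ ?_
  have hFω : (Function.support fun j ↦ F j ω).Finite :=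
    hF.subset fun j hj h ↦ hj (congrFun h ω)
  rw [← tsum_eq_finsum (L := .unconditional ι) hFω, enorm_eq_self]
  exact enorm_tsum_le_tsum_enorm

end Integral

lemma ofReal_two_rpow_mul_rpow_mul {M : ℝ} (hM : 0 < M) (j : ℤ) (q : ℝ) (s : ℝ≥0) :
    ENNReal.ofReal (2 ^ ((j : ℝ) * q) * M ^ q * s) = (2 ^ j * ENNReal.ofReal M) ^ q * s := by
  rw [ENNReal.ofReal_mul (by positivity), ENNReal.ofReal_coe_nnreal, Real.rpow_mul two_pos.le,
    ← Real.mul_rpow (by positivity) hM.le, ← ENNReal.ofReal_rpow_of_pos (by positivity),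
    ENNReal.ofReal_mul (by positivity), ← ENNReal.ofReal_rpow_of_pos two_pos,
    ENNReal.ofReal_ofNat, ENNReal.rpow_intCast]

theorem dyadic_interpolation_general {p₀ p₁ p : ℝ} (hp : 0 < p) (hp₀ : p₀ < p) (hp₁ : p < p₁) :
    ∃ C : ℝ, 0 < C ∧
      ∀ (Ω : Type u) [MeasurableSpace Ω] (E : Type v) [TopologicalSpace E] [ContinuousENorm E]
        (μ : Measure Ω) (F : ℤ → Ω → E) (s : ℤ → ℝ≥0) (M : ℝ),
        0 < M → (∀ j, AEStronglyMeasurable (F j) μ) →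
        (∀ j, ∫⁻ ω, supportRPow p₀ ‖F j ω‖ₑ ∂μ ≤
            ENNReal.ofReal (2 ^ ((j : ℝ) * p₀) * M ^ p₀ * s j)) →
        (∀ j, eLpNorm (F j) (ENNReal.ofReal p₁) μ ^ p₁ ≤
            ENNReal.ofReal (2 ^ ((j : ℝ) * p₁) * M ^ p₁ * s j)) →
        eLpNorm (fun ω ↦ ∑' j, ‖F j ω‖ₑ) (ENNReal.ofReal p) μ ^ p ≤
          ENNReal.ofReal (C ^ p * M ^ p) *
            ∑' j : ℤ, ENNReal.ofReal (2 ^ ((j : ℝ) * p) * s j) := by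
  have hD := dyadicConst_ne_top hp hp₀ hp₁
  have hD_pos : 0 < (dyadicConst p₀ p₁ p).toReal := ENNReal.toReal_pos dyadicConst_ne_zero hD
  refine ⟨2 ^ p⁻¹ * (dyadicConst p₀ p₁ p).toReal, by positivity, ?_⟩
  intro Ω _ E _ _ μ F s M hM hF hF₀ hF₁
  have hC : ENNReal.ofReal ((2 ^ p⁻¹ * (dyadicConst p₀ p₁ p).toReal) ^ p * M ^ p) =
      dyadicConst p₀ p₁ p ^ p * 2 * ENNReal.ofReal M ^ p := by
    rw [Real.mul_rpow (by positivity) hD_pos.le, Real.rpow_inv_rpow two_pos.le hp.ne',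
      ENNReal.ofReal_mul (by positivity), ENNReal.ofReal_mul two_pos.le, ENNReal.ofReal_ofNat,
      ← ENNReal.ofReal_rpow_of_pos hD_pos, ← ENNReal.ofReal_rpow_of_pos hM,
      ENNReal.ofReal_toReal hD, mul_comm 2]
  have weight (j : ℤ) : ENNReal.ofReal (2 ^ ((j : ℝ) * p) * s j) = (2 ^ j) ^ p * s j := by
    simpa using ofReal_two_rpow_mul_rpow_mul one_pos j p (s j)
  simp_rw [← lintegral_supportRPow_enorm_of_pos _ (hp.trans hp₁)] at hF₁
  simp_rw [ofReal_two_rpow_mul_rpow_mul hM] at hF₀ hF₁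
  rw [eLpNorm_ofReal_rpow_eq_lintegral _ hp]
  calc ∫⁻ ω, ‖∑' j, ‖F j ω‖ₑ‖ₑ ^ p ∂μ
      ≤ dyadicConst p₀ p₁ p ^ p * ∑' j : ℤ, (2 ^ j * ENNReal.ofReal M) ^ p * (s j + s j) := by
        simp_rw [enorm_eq_self]
        exact lintegral_tsum_rpow_le hp hp₀ hp₁ (by simpa) ENNReal.ofReal_ne_top
          (fun j ↦ (hF j).enorm) hF₀ hF₁
    _ = _ := by
        simp_rw [hC, weight, mul_assoc, ← ENNReal.tsum_mul_left,
          ENNReal.mul_rpow_of_nonneg _ _ hp.le]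
        congr! 3 with j
        ring

/-- dyadic interpolation lemma.  First conjunct: the case `0 < p₀ < p₁ < ∞`.
Second conjunct: the case `p₀ = 0`, where the hypothesis for `ν = 0` is replaced by a
bound on the measure of the support. -/
theorem dyadic_interpolation :
    (∀ p₀ p₁ p : ℝ, 0 < p₀ → p₀ < p₁ → p₀ < p → p < p₁ →
      ∃ C : ℝ, 0 < C ∧
        ∀ (Ω : Type) [MeasurableSpace Ω], ∀ (μ : Measure Ω)
          (F : ℤ → Ω → ℂ) (s : ℤ → ℝ) (M : ℝ),
          0 < M → (∀ j, 0 ≤ s j) → (∀ j, Measurable (F j)) →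
          (Function.support F).Finite →
          (∀ j, eLpNorm (F j) (ENNReal.ofReal p₀) μ ^ p₀ ≤
              ENNReal.ofReal (2 ^ ((j : ℝ) * p₀) * M ^ p₀ * s j)) →
          (∀ j, eLpNorm (F j) (ENNReal.ofReal p₁) μ ^ p₁ ≤
              ENNReal.ofReal (2 ^ ((j : ℝ) * p₁) * M ^ p₁ * s j)) →
          eLpNorm (fun x => ∑ᶠ j, F j x) (ENNReal.ofReal p) μ ^ p ≤
            ENNReal.ofReal (C ^ p * M ^ p) *
              ∑' j : ℤ, ENNReal.ofReal (2 ^ ((j : ℝ) * p) * s j))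
    ∧
    (∀ p₁ p : ℝ, 0 < p₁ → 0 < p → p < p₁ →
      ∃ C : ℝ, 0 < C ∧
        ∀ (Ω : Type) [MeasurableSpace Ω], ∀ (μ : Measure Ω)
          (F : ℤ → Ω → ℂ) (s : ℤ → ℝ) (M : ℝ),
          0 < M → (∀ j, 0 ≤ s j) → (∀ j, Measurable (F j)) →
          (Function.support F).Finite →
          (∀ j, μ {x | F j x ≠ 0} ≤ ENNReal.ofReal (s j)) →
          (∀ j, eLpNorm (F j) (ENNReal.ofReal p₁) μ ^ p₁ ≤
              ENNReal.ofReal (2 ^ ((j : ℝ) * p₁) * M ^ p₁ * s j)) →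
          eLpNorm (fun x => ∑ᶠ j, F j x) (ENNReal.ofReal p) μ ^ p ≤
            ENNReal.ofReal (C ^ p * M ^ p) *
              ∑' j : ℤ, ENNReal.ofReal (2 ^ ((j : ℝ) * p) * s j)) := by
  refine ⟨fun p₀ p₁ p hp₀ _ hp₀p hpp₁ ↦ ?_, fun p₁ p _ hp hpp₁ ↦ ?_⟩
  · obtain ⟨C, hC, bound⟩ := dyadic_interpolation_general (hp₀.trans hp₀p) hp₀p hpp₁
    refine ⟨C, hC, fun Ω _ μ F s M hM hs hF hfin hF₀ hF₁ ↦ ?_⟩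
    lift s to ℤ → ℝ≥0 using hs
    simp_rw [← lintegral_supportRPow_enorm_of_pos _ hp₀] at hF₀
    exact (ENNReal.rpow_le_rpow (eLpNorm_finsum_le_eLpNorm_tsum_enorm hfin _)
      (hp₀.trans hp₀p).le).trans
      (bound Ω ℂ μ F s M hM (fun j ↦ (hF j).aestronglyMeasurable) hF₀ hF₁)
  · obtain ⟨C, hC, bound⟩ := dyadic_interpolation_general hp hp hpp₁
    refine ⟨C, hC, fun Ω _ μ F s M hM hs hF hfin hF₀ hF₁ ↦ ?_⟩
    lift s to ℤ → ℝ≥0 using hs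
    refine (ENNReal.rpow_le_rpow (eLpNorm_finsum_le_eLpNorm_tsum_enorm hfin _) hp.le).trans
      (bound Ω ℂ μ F s M hM (fun j ↦ (hF j).aestronglyMeasurable) (fun j ↦ ?_) hF₁)
    simpa [lintegral_supportRPow_zero_enorm (hF j (measurableSet_singleton 0)).compl] using hF₀ j
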